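/- Let (Q, m, k) be a commutative Noetherian local ring and let f, g be an exact pair of zerodivisors in m, i.e. f and g are nonzero elements of m with ann_Q(f) = (g) and ann_Q(g) = (f). Set R = Q/(f). Then for every finitely generated R-module M, the curvature of M over Q is bounded as follows: limsup_{i→∞} (β_i^Q(M))^{1/i} ≤ max( limsup_{i→∞} (β_i^R(M))^{1/i}, 1 ). (That is, curv_Q(M) ≤ max{curv_R(M), 1}.) -/

import Mathlib

open CategoryTheory TensorProduct

/-- The `i`-th Betti number of a module `M` over a local ring `A`:
`β_i^A(M) = dim_k Tor_i^A(M, k)`, computed as the `k`-dimension of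
`k ⊗_A Tor_i^A(M, k)` (the two agree since `Tor_i^A(M, k)` is a `k`-vector
space, being annihilated by the maximal ideal of `A`). -/
noncomputable def bettiNumber (A : Type) [CommRing A] [IsLocalRing A]
    (M : Type) [AddCommGroup M] [Module A M] (i : ℕ) : ℕ :=
  Module.finrank (IsLocalRing.ResidueField A)
    (IsLocalRing.ResidueField A ⊗[A]
      (((Tor (ModuleCat A) i).obj (ModuleCat.of A M)).obj
        (ModuleCat.of A (IsLocalRing.ResidueField A))))

/-!
Let `R` be a finite local `Q`-algebra and `M` a finite `R`-module. Choose a minimal cover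
`R ^ b → M` with kernel `N`, so that `b = β₀ᴿ(M)` and `βⱼᴿ(N) = βⱼ₊₁ᴿ(M)`. The long exact
sequence of `Tor` over `Q` gives `βₙ₊₁^Q(M) ≤ b * βₙ₊₁^Q(R) + βₙ^Q(N)`, and by induction the Betti
sequence of `M` over `Q` is bounded by the Cauchy product of those of `R` over `Q` and of `M` over
`R`. If `c > max (curv_Q R) (curv_R M)` is finite, both generating series converge at `c⁻¹`, hence
so does their product, and therefore `curv_Q M ≤ c`. For `R = Q ⧸ (f)` the exact sequences
`0 → Q ⧸ (g) → Q → Q ⧸ (f) → 0` and `0 → Q ⧸ (f) → Q → Q ⧸ (g) → 0` show that `βₙ^Q(R) ≤ 1` for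
all `n`, so that `curv_Q R ≤ 1`.
-/

universe u

lemma leftDerived_app_comp_isoLeftDerivedObj_hom {C D : Type*} [Category* C] [Category* D]
    [Abelian C] [HasProjectiveResolutions C] [Abelian D] {F G : C ⥤ D} [F.Additive] [G.Additive]
    (α : F ⟶ G) {X : C} (P : ProjectiveResolution X) (n : ℕ) :
    (NatTrans.leftDerived α n).app X ≫ (P.isoLeftDerivedObj G n).hom =
      (P.isoLeftDerivedObj F n).hom ≫ HomologicalComplex.homologyMap
        ((NatTrans.mapHomologicalComplex α _).app P.complex) n := by
  rw [P.leftDerived_app_eq, Category.assoc, Category.assoc, Iso.inv_hom_id, Category.comp_id]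
  rfl

section TorModule

open MonoidalCategory

variable {A : Type u} [CommRing A]

/-- The functor `M ↦ M ⊗ K` for a chain complex `K` of `A`-modules. -/
noncomputable def tensorComplex (K : ChainComplex (ModuleCat.{u} A) ℕ) :
    ModuleCat.{u} A ⥤ ChainComplex (ModuleCat.{u} A) ℕ where
  obj M := (((tensoringLeft (ModuleCat.{u} A)).obj M).mapHomologicalComplex _).obj K
  map φ := (NatTrans.mapHomologicalComplex ((tensoringLeft (ModuleCat.{u} A)).map φ) _).app K

instance (K : ChainComplex (ModuleCat.{u} A) ℕ) : (tensorComplex K).PreservesZeroMorphisms where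
  map_zero _ _ := by
    ext i : 1
    exact MonoidalPreadditive.zero_whiskerRight

lemma shortExact_map_tensorComplex {Y : ModuleCat.{u} A} (P : ProjectiveResolution Y)
    {S : ShortComplex (ModuleCat.{u} A)} (hS : S.ShortExact) :
    (S.map (tensorComplex P.complex)).ShortExact := by
  refine HomologicalComplex.shortExact_of_degreewise_shortExact _ fun i => ?_
  have : Projective (P.complex.X i) := P.projective i
  have : Module.Projective A (P.complex.X i) := inferInstance
  exact hS.map_of_exact (tensorRight (P.complex.X i))

/-- `Tor_n^A(M, Y)` for unbundled modules. -/
noncomputable abbrev TorModule (A : Type u) [CommRing A] (n : ℕ) (M Y : Type u)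
    [AddCommGroup M] [Module A M] [AddCommGroup Y] [Module A Y] : ModuleCat.{u} A :=
  ((Tor (ModuleCat.{u} A) n).obj (ModuleCat.of A M)).obj (ModuleCat.of A Y)

variable {N F M : Type u} [AddCommGroup N] [Module A N] [AddCommGroup F] [Module A F]
  [AddCommGroup M] [Module A M]

/-- The map `Tor_n^A(M, Y) → Tor_n^A(N, Y)` induced by a linear map `M → N`. -/
noncomputable def torMap (n : ℕ) (Y : Type u) [AddCommGroup Y] [Module A Y] (φ : M →ₗ[A] N) :
    TorModule A n M Y →ₗ[A] TorModule A n N Y :=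
  (((Tor (ModuleCat.{u} A) n).map (ModuleCat.ofHom φ)).app (ModuleCat.of A Y)).hom

/-- `Tor` in degree zero is the tensor product. -/
noncomputable def torZeroEquiv (M Y : Type u) [AddCommGroup M] [Module A M]
    [AddCommGroup Y] [Module A Y] : TorModule A 0 M Y ≃ₗ[A] M ⊗[A] Y :=
  (((tensoringLeft (ModuleCat.{u} A)).obj
    (ModuleCat.of A M)).leftDerivedZeroIsoSelf.app (ModuleCat.of A Y)).toLinearEquiv

variable (Y : Type u) [AddCommGroup Y] [Module A Y]

/-- `Tor_n^A(M, Y)` as the homology of `M ⊗ P`, for a projective resolution `P` of `Y`. -/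
noncomputable def torEquivHomology (P : ProjectiveResolution (ModuleCat.of A Y)) (n : ℕ)
    (M : Type u) [AddCommGroup M] [Module A M] :
    TorModule A n M Y ≃ₗ[A] ((tensorComplex P.complex).obj (ModuleCat.of A M)).homology n :=
  (P.isoLeftDerivedObj ((tensoringLeft (ModuleCat.{u} A)).obj (ModuleCat.of A M)) n).toLinearEquiv

lemma homologyMap_comp_torEquivHomology (P : ProjectiveResolution (ModuleCat.of A Y)) (n : ℕ)
    (φ : M →ₗ[A] N) :
    (HomologicalComplex.homologyMap ((tensorComplex P.complex).map (ModuleCat.ofHom φ)) n).hom ∘ₗ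
        torEquivHomology Y P n M =
      torEquivHomology Y P n N ∘ₗ torMap n Y φ :=
  congrArg ModuleCat.Hom.hom (leftDerived_app_comp_isoLeftDerivedObj_hom
    ((tensoringLeft (ModuleCat.{u} A)).map (ModuleCat.ofHom φ)) P n).symm

lemma torMap_zero_surjective {p : F →ₗ[A] M} (hp : Function.Surjective p) :
    Function.Surjective (torMap 0 Y p) := by
  let P := projectiveResolution (ModuleCat.of A Y)
  let φ := (tensorComplex P.complex).map (ModuleCat.ofHom p)
  have : Epi (ModuleCat.ofHom p) := (ModuleCat.epi_iff_surjective _).2 hp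
  have : Epi (φ.f 0) :=
    inferInstanceAs (Epi ((tensorRight (P.complex.X 0)).map (ModuleCat.ofHom p)))
  have hφ : Function.Surjective (HomologicalComplex.homologyMap φ 0).hom :=
    (ModuleCat.epi_iff_surjective _).1
      (HomologicalComplex.epi_homologyMap_of_epi_of_not_rel φ 0 (by simp))
  have h := congrArg DFunLike.coe (homologyMap_comp_torEquivHomology Y P 0 p)
  simp only [LinearMap.coe_comp, LinearEquiv.coe_coe] at h
  rw [← EquivLike.comp_surjective _ (torEquivHomology Y P 0 M), ← h]
  exact hφ.comp (torEquivHomology Y P 0 F).surjective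

lemma subsingleton_torModule_succ_of_flat (n : ℕ) (M : Type u) [AddCommGroup M] [Module A M]
    [Module.Flat A M] : Subsingleton (TorModule A (n + 1) M Y) := by
  let P := projectiveResolution (ModuleCat.of A Y)
  have h : ((P.complex.sc (n + 1)).map (tensorLeft (ModuleCat.of A M))).Exact :=
    Module.Flat.lTensor_shortComplex_exact _ _ (P.complex_exactAt_succ n)
  have := ModuleCat.subsingleton_of_isZero (HomologicalComplex.ExactAt.isZero_homology
    (K := (tensorComplex P.complex).obj (ModuleCat.of A M)) h)
  exact (torEquivHomology Y P (n + 1) M).injective.subsingleton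

variable {i : N →ₗ[A] F} {p : F →ₗ[A] M}

section ShortExact

variable (hi : Function.Injective i) (hp : Function.Surjective p) (hip : Function.Exact i p)
include hi hp hip

lemma torMap_exact (n : ℕ) : Function.Exact (torMap n Y i) (torMap n Y p) := by
  let P := projectiveResolution (ModuleCat.of A Y)
  have hS := shortExact_map_tensorComplex P (S := .mk (ModuleCat.ofHom i) (ModuleCat.ofHom p)
    (ModuleCat.hom_ext hip.linearMap_comp_eq_zero)) (ModuleCat.shortComplex_shortExact _ hip hi hp)
  exact (Function.Exact.iff_of_ladder_linearEquiv (homologyMap_comp_torEquivHomology Y P n i)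
    (homologyMap_comp_torEquivHomology Y P n p)).1
    ((ShortComplex.ShortExact.moduleCat_exact_iff_function_exact _).1 (hS.homology_exact₂ n))

lemma exists_tor_connecting (n : ℕ) :
    ∃ δ : TorModule A (n + 1) M Y →ₗ[A] TorModule A n N Y,
      Function.Exact (torMap (n + 1) Y p) δ ∧ Function.Exact δ (torMap n Y i) := by
  let P := projectiveResolution (ModuleCat.of A Y)
  have hS := shortExact_map_tensorComplex P (S := .mk (ModuleCat.ofHom i) (ModuleCat.ofHom p)
    (ModuleCat.hom_ext hip.linearMap_comp_eq_zero)) (ModuleCat.shortComplex_shortExact _ hip hi hp)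
  let d : ((tensorComplex P.complex).obj (ModuleCat.of A M)).homology (n + 1) →ₗ[A]
      ((tensorComplex P.complex).obj (ModuleCat.of A N)).homology n :=
    (hS.δ (n + 1) n (by simp)).hom
  let δ : TorModule A (n + 1) M Y →ₗ[A] TorModule A n N Y :=
    (torEquivHomology Y P n N).symm.toLinearMap ∘ₗ d ∘ₗ
      (torEquivHomology Y P (n + 1) M).toLinearMap
  have hδ : d ∘ₗ (torEquivHomology Y P (n + 1) M).toLinearMap =
      (torEquivHomology Y P n N).toLinearMap ∘ₗ δ := by
    ext
    simp [δ]
  refine ⟨δ, ?_, ?_⟩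
  · exact (Function.Exact.iff_of_ladder_linearEquiv
      (homologyMap_comp_torEquivHomology Y P (n + 1) p) hδ).1
      ((ShortComplex.ShortExact.moduleCat_exact_iff_function_exact _).1
        (hS.homology_exact₃ (n + 1) n (by simp)))
  · exact (Function.Exact.iff_of_ladder_linearEquiv hδ
      (homologyMap_comp_torEquivHomology Y P n i)).1
      ((ShortComplex.ShortExact.moduleCat_exact_iff_function_exact _).1
        (hS.homology_exact₁ (n + 1) n (by simp)))

lemma exists_injective_torModule_succ_of_flat [Module.Flat A F] (n : ℕ) :
    ∃ δ : TorModule A (n + 1) M Y →ₗ[A] TorModule A n N Y, Function.Injective δ := by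
  obtain ⟨δ, hpδ, -⟩ := exists_tor_connecting Y hi hp hip n
  have := subsingleton_torModule_succ_of_flat (A := A) Y n F
  refine ⟨δ, (injective_iff_map_eq_zero δ).2 fun x hx => ?_⟩
  obtain ⟨y, rfl⟩ := (hpδ x).1 hx
  rw [Subsingleton.elim y 0, map_zero]

end ShortExact

end TorModule

instance torModule_finite {A : Type u} [CommRing A] [IsNoetherianRing A] (n : ℕ) (M Y : Type u)
    [AddCommGroup M] [Module A M] [Module.Finite A M] [AddCommGroup Y] [Module A Y]
    [Module.Finite A Y] : Module.Finite A (TorModule A n M Y) := by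
  induction n generalizing M with
  | zero => exact Module.Finite.equiv (torZeroEquiv M Y).symm
  | succ n ih =>
    obtain ⟨b, p, hp⟩ := Module.Finite.exists_fin' A M
    obtain ⟨δ, hδ⟩ := exists_injective_torModule_succ_of_flat Y
      (LinearMap.ker p).subtype_injective hp p.exact_subtype_ker_map n
    have := ih (LinearMap.ker p)
    exact Module.Finite.of_injective δ hδ

lemma annihilator_le_annihilator_tensorProduct (A M Y : Type*) [CommRing A] [AddCommGroup M]
    [Module A M] [AddCommGroup Y] [Module A Y] :
    Module.annihilator A Y ≤ Module.annihilator A (M ⊗[A] Y) := by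
  intro a ha
  refine Module.mem_annihilator.2 fun z => ?_
  induction z using TensorProduct.induction_on with
  | zero => exact smul_zero a
  | tmul m y => rw [← tmul_smul, Module.mem_annihilator.1 ha, tmul_zero]
  | add y z hy hz => rw [smul_add, hy, hz, add_zero]

lemma annihilator_le_annihilator_torModule {A : Type u} [CommRing A] (n : ℕ) (M Y : Type u)
    [AddCommGroup M] [Module A M] [AddCommGroup Y] [Module A Y] :
    Module.annihilator A Y ≤ Module.annihilator A (TorModule A n M Y) := by
  induction n generalizing M with
  | zero =>
    rw [(torZeroEquiv M Y).annihilator_eq]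
    exact annihilator_le_annihilator_tensorProduct A M Y
  | succ n ih =>
    obtain ⟨F, _, _, _, p, hp⟩ : ∃ (F : Type u) (_ : AddCommGroup F) (_ : Module A F)
        (_ : Module.Flat A F) (p : F →ₗ[A] M), Function.Surjective p :=
      ⟨M →₀ A, inferInstance, inferInstance, inferInstance, Finsupp.linearCombination A id,
        Finsupp.linearCombination_id_surjective A M⟩
    obtain ⟨δ, hδ⟩ := exists_injective_torModule_succ_of_flat Y
      (LinearMap.ker p).subtype_injective hp p.exact_subtype_ker_map n
    exact (ih (LinearMap.ker p)).trans (δ.annihilator_le_of_injective hδ)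

section Length

variable {A X Y Z : Type*} [CommRing A] [AddCommGroup X] [Module A X] [AddCommGroup Y]
  [Module A Y] [AddCommGroup Z] [Module A Z]

lemma length_le_add_of_exact {u : X →ₗ[A] Y} {v : Y →ₗ[A] Z} (h : Function.Exact u v) :
    Module.length A Y ≤ Module.length A X + Module.length A Z := by
  rw [Module.length_eq_add_of_exact (LinearMap.ker v).subtype v.rangeRestrict
    (LinearMap.ker v).subtype_injective v.surjective_rangeRestrict
    (by rw [LinearMap.exact_iff, LinearMap.ker_rangeRestrict, Submodule.range_subtype]),
    LinearMap.exact_iff.1 h]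
  exact add_le_add (Module.length_le_of_surjective u.rangeRestrict u.surjective_rangeRestrict)
    (Module.length_le_of_injective (LinearMap.range v).subtype (Submodule.subtype_injective _))

lemma injective_of_surjective_of_length_le {v : X →ₗ[A] Y} (hv : Function.Surjective v)
    (h : Module.length A X ≤ Module.length A Y) (hY : Module.length A Y ≠ ⊤) :
    Function.Injective v := by
  rw [Module.length_eq_add_of_exact (LinearMap.ker v).subtype v
    (LinearMap.ker v).subtype_injective hv v.exact_subtype_ker_map] at h
  have hker : Module.length A (LinearMap.ker v) = 0 := by
    refine nonpos_iff_eq_zero.1 ((ENat.add_le_add_iff_right hY).1 ?_)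
    rwa [zero_add]
  rw [Module.length_eq_zero_iff, Submodule.subsingleton_iff_eq_bot] at hker
  exact LinearMap.ker_eq_bot.1 hker

end Length

section TorLength

variable {A : Type u} [CommRing A]

/-- The length of `Tor_n^A(M, Y)`. For `Y` the residue field it replaces the Betti number, being
well behaved along exact sequences without finiteness assumptions. -/
noncomputable def torLength (A : Type u) [CommRing A] (n : ℕ) (M Y : Type u) [AddCommGroup M]
    [Module A M] [AddCommGroup Y] [Module A Y] : ℕ∞ :=
  Module.length A (TorModule A n M Y)

variable {N F M : Type u} [AddCommGroup N] [Module A N] [AddCommGroup F] [Module A F]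
  [AddCommGroup M] [Module A M] (Y : Type u) [AddCommGroup Y] [Module A Y]
  {i : N →ₗ[A] F} {p : F →ₗ[A] M}

variable (M) in
lemma torLength_zero : torLength A 0 M Y = Module.length A (M ⊗[A] Y) :=
  (torZeroEquiv M Y).length_eq

lemma torLength_zero_le_of_surjective (hp : Function.Surjective p) :
    torLength A 0 M Y ≤ torLength A 0 F Y :=
  Module.length_le_of_surjective _ (torMap_zero_surjective Y hp)

lemma torLength_eq_zero_of_subsingleton (n : ℕ) (M : Type u) [AddCommGroup M] [Module A M]
    [Subsingleton M] : torLength A n M Y = 0 := by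
  cases n with
  | zero => rw [torLength_zero]; exact Module.length_eq_zero
  | succ n =>
    have := subsingleton_torModule_succ_of_flat (A := A) Y n M
    exact Module.length_eq_zero

section ShortExact

variable (hi : Function.Injective i) (hp : Function.Surjective p) (hip : Function.Exact i p)
include hi hp hip

lemma torLength_le_add (n : ℕ) : torLength A n F Y ≤ torLength A n N Y + torLength A n M Y :=
  length_le_add_of_exact (torMap_exact Y hi hp hip n)

lemma torLength_succ_le_add (n : ℕ) :
    torLength A (n + 1) M Y ≤ torLength A (n + 1) F Y + torLength A n N Y := by
  obtain ⟨δ, hpδ, -⟩ := exists_tor_connecting Y hi hp hip n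
  exact length_le_add_of_exact hpδ

lemma torLength_succ_le_of_flat [Module.Flat A F] (n : ℕ) :
    torLength A (n + 1) M Y ≤ torLength A n N Y := by
  obtain ⟨δ, hδ⟩ := exists_injective_torModule_succ_of_flat Y hi hp hip n
  exact Module.length_le_of_injective δ hδ

lemma torMap_eq_zero_of_torLength_zero_le [Module.Flat A F]
    (h : torLength A 0 F Y ≤ torLength A 0 M Y) (hM : torLength A 0 M Y ≠ ⊤) (n : ℕ) :
    torMap n Y i = 0 := by
  cases n with
  | zero =>
    have hinj := injective_of_surjective_of_length_le (torMap_zero_surjective Y hp) h hM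
    ext x
    exact hinj ((torMap_exact Y hi hp hip 0).apply_apply_eq_zero x |>.trans (map_zero _).symm)
  | succ n =>
    have := subsingleton_torModule_succ_of_flat (A := A) Y n F
    exact Subsingleton.elim _ _

lemma torLength_le_succ_of_torLength_zero_le [Module.Flat A F]
    (h : torLength A 0 F Y ≤ torLength A 0 M Y) (hM : torLength A 0 M Y ≠ ⊤) (n : ℕ) :
    torLength A n N Y ≤ torLength A (n + 1) M Y := by
  obtain ⟨δ, -, hδi⟩ := exists_tor_connecting Y hi hp hip n
  refine Module.length_le_of_surjective δ fun x => (hδi x).1 ?_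
  rw [torMap_eq_zero_of_torLength_zero_le Y hi hp hip h hM, LinearMap.zero_apply]

end ShortExact

variable (M) in
lemma torLength_fin_fun_le (n b : ℕ) : torLength A n (Fin b → M) Y ≤ b * torLength A n M Y := by
  induction b with
  | zero => exact (torLength_eq_zero_of_subsingleton Y n _).le.trans bot_le
  | succ b ih =>
    have hex : Function.Exact (LinearMap.single A (fun _ : Fin (b + 1) => M) 0)
        (LinearMap.funLeft A M Fin.succ) := by
      refine LinearMap.exact_iff.2 (Submodule.ext fun x => ⟨fun hx => ⟨x 0, ?_⟩, ?_⟩)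
      · ext j
        refine Fin.cases (by simp) (fun j => ?_) j
        simpa using (congrFun hx j).symm
      · rintro ⟨m, rfl⟩
        ext j
        simp [LinearMap.funLeft_apply]
    calc torLength A n (Fin (b + 1) → M) Y
        ≤ torLength A n M Y + torLength A n (Fin b → M) Y :=
          torLength_le_add Y (Pi.single_injective (M := fun _ => M) 0)
            (LinearMap.funLeft_surjective_of_injective _ _ _ (Fin.succ_injective b)) hex n
      _ ≤ torLength A n M Y + b * torLength A n M Y := by gcongr
      _ = (b + 1 : ℕ) * torLength A n M Y := by push_cast; ring

end TorLength

section ResidueField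

open IsLocalRing Finset

variable {A : Type u} [CommRing A] [IsLocalRing A]

lemma length_eq_finrank_residueField (V : Type*) [AddCommGroup V] [Module A V]
    [Module (ResidueField A) V] [IsScalarTower A (ResidueField A) V]
    [Module.Finite (ResidueField A) V] :
    Module.length A V = Module.finrank (ResidueField A) V := by
  rw [Module.length_eq_of_surjective (R := ResidueField A) residue_surjective,
    Module.length_eq_finrank]

lemma torLength_zero_residueField (M : Type u) [AddCommGroup M] [Module A M] [Module.Finite A M] :
    torLength A 0 M (ResidueField A) =
      Module.finrank (ResidueField A) (ResidueField A ⊗[A] M) := by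
  rw [torLength_zero, (TensorProduct.comm A M (ResidueField A)).length_eq,
    length_eq_finrank_residueField]

lemma exists_minimal_cover (M : Type u) [AddCommGroup M] [Module A M] [Module.Finite A M] :
    ∃ (b : ℕ) (p : (Fin b → A) →ₗ[A] M),
      Function.Surjective p ∧ torLength A 0 M (ResidueField A) = b := by
  let basis := Module.finBasis (ResidueField A) (ResidueField A ⊗[A] M)
  choose v hv using fun j =>
    TensorProduct.mk_surjective A M (ResidueField A) residue_surjective (basis j)
  refine ⟨_, Fintype.linearCombination A v, ?_, torLength_zero_residueField M⟩
  rw [← LinearMap.range_eq_top, Fintype.range_linearCombination,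
    span_eq_top_of_tmul_eq_basis v basis hv]

lemma torLength_ker_le_of_minimal {M : Type u} [AddCommGroup M] [Module A M] {b : ℕ}
    {p : (Fin b → A) →ₗ[A] M} (hp : Function.Surjective p)
    (hb : torLength A 0 M (ResidueField A) = b) (n : ℕ) :
    torLength A n (LinearMap.ker p) (ResidueField A) ≤
      torLength A (n + 1) M (ResidueField A) := by
  refine torLength_le_succ_of_torLength_zero_le _ (LinearMap.ker p).subtype_injective hp
    p.exact_subtype_ker_map ?_ (hb ▸ ENat.natCast_ne_top b) n
  rw [hb, torLength_zero_residueField]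
  simp

theorem torLength_le_sum_antidiagonal {Q R : Type u} [CommRing Q] [CommRing R] [IsLocalRing R]
    [IsNoetherianRing R] [Algebra Q R] (n : ℕ) (M Y : Type u) [AddCommGroup M] [Module Q M]
    [Module R M] [IsScalarTower Q R M] [Module.Finite R M] [AddCommGroup Y] [Module Q Y] :
    torLength Q n M Y ≤ ∑ ij ∈ antidiagonal n,
      torLength Q ij.1 R Y * torLength R ij.2 M (ResidueField R) := by
  induction n generalizing M with
  | zero =>
    obtain ⟨b, p, hp, hb⟩ := exists_minimal_cover (A := R) M
    have hM := torLength_zero_le_of_surjective (A := Q) (p := p.restrictScalars Q) Y hp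
    simpa [hb, mul_comm] using hM.trans (torLength_fin_fun_le R Y 0 b)
  | succ n ih =>
    obtain ⟨b, p, hp, hb⟩ := exists_minimal_cover (A := R) M
    have hM := torLength_succ_le_add (A := Q) (i := (LinearMap.ker p).subtype.restrictScalars Q)
      (p := p.restrictScalars Q) Y (LinearMap.ker p).subtype_injective hp
      p.exact_subtype_ker_map n
    rw [Finset.Nat.sum_antidiagonal_succ', hb, mul_comm _ (b : ℕ∞)]
    refine hM.trans (add_le_add (torLength_fin_fun_le R Y (n + 1) b)
      ((ih (LinearMap.ker p)).trans ?_))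
    gcongr with ij
    exact torLength_ker_le_of_minimal hp hb ij.2

end ResidueField

section BettiNumber

open IsLocalRing Finset

lemma finrank_residueField_tensor_eq_length {A : Type u} [CommRing A] [IsLocalRing A]
    {X : Type u} [AddCommGroup X] [Module A X] [Module.Finite A X]
    (h : maximalIdeal A ≤ Module.annihilator A X) :
    (Module.finrank (ResidueField A) (ResidueField A ⊗[A] X) : ℕ∞) = Module.length A X := by
  have hbot : maximalIdeal A • (⊤ : Submodule A X) = ⊥ :=
    eq_bot_iff.2 (Submodule.smul_le.2 fun _ ha x _ => Module.mem_annihilator.1 (h ha) x)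
  let e : (ResidueField A ⊗[A] X) ≃ₗ[A] X :=
    TensorProduct.quotTensorEquivQuotSMul X (maximalIdeal A) ≪≫ₗ
      Submodule.quotEquivOfEqBot _ hbot
  rw [← length_eq_finrank_residueField (A := A), e.length_eq]

lemma bettiNumber_eq_torLength (A : Type) [CommRing A] [IsLocalRing A] [IsNoetherianRing A]
    (M : Type) [AddCommGroup M] [Module A M] [Module.Finite A M] (n : ℕ) :
    (bettiNumber A M n : ℕ∞) = torLength A n M (ResidueField A) :=
  finrank_residueField_tensor_eq_length <|
    (Ideal.annihilator_quotient (I := maximalIdeal A)).ge.trans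
      (annihilator_le_annihilator_torModule n M (ResidueField A))

theorem bettiNumber_le_sum_antidiagonal (Q R M : Type) [CommRing Q] [IsLocalRing Q]
    [IsNoetherianRing Q] [CommRing R] [IsLocalRing R] [Algebra Q R] [Module.Finite Q R]
    [AddCommGroup M] [Module Q M] [Module R M] [IsScalarTower Q R M] [Module.Finite R M] (n : ℕ) :
    bettiNumber Q M n ≤
      ∑ ij ∈ antidiagonal n, bettiNumber Q R ij.1 * bettiNumber R M ij.2 := by
  have := Module.Finite.trans (R := Q) R M
  have := isNoetherian_of_isNoetherianRing_of_finite Q R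
  have : IsNoetherianRing R := isNoetherian_of_tower Q this
  rw [← ENat.natCast_le_natCast]
  push_cast
  simpa only [bettiNumber_eq_torLength] using torLength_le_sum_antidiagonal n M (ResidueField Q)

end BettiNumber

section ExactPair

variable {Q : Type u} [CommRing Q] {f g : Q}

/-- `ann f = (g)` and `ann g = (f)`: the defining relations of an exact pair of zerodivisors, with
`f` and `g` allowed to vanish. -/
structure IsExactPair (f g : Q) : Prop where
  mul_fst_eq_zero_iff : ∀ x, x * f = 0 ↔ x ∈ Ideal.span {g}
  mul_snd_eq_zero_iff : ∀ x, x * g = 0 ↔ x ∈ Ideal.span {f}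

namespace IsExactPair

lemma symm (h : IsExactPair f g) : IsExactPair g f :=
  ⟨h.mul_snd_eq_zero_iff, h.mul_fst_eq_zero_iff⟩

lemma exists_injective_exact_mkQ (h : IsExactPair f g) :
    ∃ i : (Q ⧸ Ideal.span {g}) →ₗ[Q] Q,
      Function.Injective i ∧ Function.Exact i (Ideal.span {f}).mkQ := by
  have hker : LinearMap.ker (LinearMap.mulRight Q f) = Ideal.span {g} :=
    Submodule.ext h.mul_fst_eq_zero_iff
  refine ⟨Submodule.liftQ _ (LinearMap.mulRight Q f) hker.ge,
    LinearMap.ker_eq_bot.1 (Submodule.ker_liftQ_eq_bot _ _ _ hker.le), LinearMap.exact_iff.2 ?_⟩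
  rw [Submodule.range_liftQ, Submodule.ker_mkQ]
  ext x
  simp [Ideal.mem_span_singleton', eq_comm]

theorem torLength_quotient_le (h : IsExactPair f g) (n : ℕ) (Y : Type u) [AddCommGroup Y]
    [Module Q Y] : torLength Q n (Q ⧸ Ideal.span {f}) Y ≤ Module.length Q Y := by
  induction n generalizing f g with
  | zero =>
    calc torLength Q 0 (Q ⧸ Ideal.span {f}) Y
        ≤ torLength Q 0 Q Y := torLength_zero_le_of_surjective Y (Submodule.mkQ_surjective _)
      _ = Module.length Q Y := by rw [torLength_zero, (TensorProduct.lid Q Y).length_eq]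
  | succ n ih =>
    obtain ⟨i, hi, hif⟩ := h.exists_injective_exact_mkQ
    exact (torLength_succ_le_of_flat Y hi (Submodule.mkQ_surjective _) hif n).trans (ih h.symm)

lemma bettiNumber_quotient_le_one {Q : Type} [CommRing Q] [IsLocalRing Q] [IsNoetherianRing Q]
    {f g : Q} (h : IsExactPair f g) (n : ℕ) :
    bettiNumber Q (Q ⧸ Ideal.span {f}) n ≤ 1 := by
  rw [← ENat.natCast_le_natCast, bettiNumber_eq_torLength]
  refine (h.torLength_quotient_le n _).trans ?_
  simp [length_eq_finrank_residueField]

end IsExactPair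

end ExactPair

section GrowthRate

open Filter Finset
open scoped ENNReal

/-- The exponential growth rate of a sequence; its logarithm is Mathlib's
`ExpGrowth.expGrowthSup`. -/
noncomputable def growthRate (u : ℕ → ℝ≥0∞) : ℝ≥0∞ :=
  limsup (fun n : ℕ => u n ^ (1 / (n : ℝ))) atTop

lemma log_growthRate (u : ℕ → ℝ≥0∞) : (growthRate u).log = ExpGrowth.expGrowthSup u := by
  rw [growthRate, ← ENNReal.logOrderIso_apply, OrderIso.limsup_apply]
  simp only [ENNReal.logOrderIso_apply, ENNReal.log_rpow]
  rw [ExpGrowth.expGrowthSup_def]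
  refine limsup_congr (Eventually.of_forall fun n => ?_)
  simp [EReal.div_eq_inv_mul, EReal.coe_inv]

lemma growthRate_le_of_le_mul_pow {u : ℕ → ℝ≥0∞} {K c : ℝ≥0∞} (hK : K ≠ ⊤)
    (h : ∀ n, u n ≤ K * c ^ n) : growthRate u ≤ c := by
  rw [← ENNReal.log_le_log_iff, log_growthRate, ← ExpGrowth.expGrowthSup_pow]
  exact ExpGrowth.expGrowthSup_le_of_eventually_le hK (Eventually.of_forall h)

lemma eventually_le_pow_of_growthRate_lt {u : ℕ → ℝ≥0∞} {d : ℝ≥0∞} (h : growthRate u < d) :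
    ∀ᶠ n in atTop, u n ≤ d ^ n := by
  filter_upwards [eventually_lt_of_limsup_lt h, eventually_gt_atTop 0] with n hn hn0
  rw [one_div, ENNReal.rpow_inv_lt_iff (by positivity), ENNReal.rpow_natCast] at hn
  exact hn.le

lemma tsum_mul_inv_pow_ne_top {u : ℕ → ℝ≥0∞} (hu : ∀ n, u n ≠ ⊤) {c : ℝ≥0∞}
    (h : growthRate u < c) : ∑' n, u n * c⁻¹ ^ n ≠ ⊤ := by
  obtain ⟨d, hud, hdc⟩ := exists_between h
  obtain ⟨N, hN⟩ := eventually_atTop.1 (eventually_le_pow_of_growthRate_lt hud)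
  have hratio : d * c⁻¹ < 1 := ENNReal.div_lt_of_lt_mul (by rwa [one_mul])
  have htail : ∀ n, u (n + N) * c⁻¹ ^ (n + N) ≤ (d * c⁻¹) ^ (n + N) := fun n => by
    rw [mul_pow]
    gcongr
    exact hN _ (Nat.le_add_left N n)
  rw [← ENNReal.summable.sum_add_tsum_nat_add' (k := N)]
  refine ENNReal.add_ne_top.2 ⟨ENNReal.sum_ne_top.2 fun n _ => ?_, ne_top_of_le_ne_top ?_
    ((ENNReal.tsum_le_tsum htail).trans
      (ENNReal.tsum_comp_le_tsum_of_injective (add_left_injective N) _))⟩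
  · exact ENNReal.mul_ne_top (hu n) (ENNReal.pow_ne_top (ENNReal.inv_ne_top.2 (ne_bot_of_gt h)))
  · simpa [ENNReal.tsum_geometric, tsub_eq_zero_iff_le] using hratio

theorem growthRate_le_max_of_le_sum_antidiagonal {u v w : ℕ → ℝ≥0∞} (hu : ∀ n, u n ≠ ⊤)
    (hv : ∀ n, v n ≠ ⊤) (h : ∀ n, w n ≤ ∑ ij ∈ antidiagonal n, u ij.1 * v ij.2) :
    growthRate w ≤ max (growthRate u) (growthRate v) := by
  refine le_of_forall_gt_imp_ge_of_dense fun c hc => ?_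
  obtain ⟨huc, hvc⟩ := max_lt_iff.1 hc
  obtain rfl | hc_top := eq_or_ne c ⊤
  · exact le_top
  have hcc : c⁻¹ * c = 1 := ENNReal.inv_mul_cancel (ne_bot_of_gt huc) hc_top
  refine growthRate_le_of_le_mul_pow (ENNReal.mul_ne_top (tsum_mul_inv_pow_ne_top hu huc)
    (tsum_mul_inv_pow_ne_top hv hvc)) fun n => (h n).trans ?_
  calc ∑ ij ∈ antidiagonal n, u ij.1 * v ij.2
      = (∑ ij ∈ antidiagonal n, (u ij.1 * c⁻¹ ^ ij.1) * (v ij.2 * c⁻¹ ^ ij.2)) * c ^ n := by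
        rw [sum_mul]
        refine sum_congr rfl fun ij hij => ?_
        rw [mul_mul_mul_comm, ← pow_add, mem_antidiagonal.1 hij, mul_assoc, ← mul_pow, hcc,
          one_pow, mul_one]
    _ ≤ (∑' ij : ℕ × ℕ, (u ij.1 * c⁻¹ ^ ij.1) * (v ij.2 * c⁻¹ ^ ij.2)) * c ^ n := by
        gcongr
        exact ENNReal.sum_le_tsum _
    _ = (∑' i, u i * c⁻¹ ^ i) * (∑' j, v j * c⁻¹ ^ j) * c ^ n := by
        simp_rw [ENNReal.tsum_prod', ENNReal.tsum_mul_left, ENNReal.tsum_mul_right]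

end GrowthRate

section Curvature

open scoped ENNReal

/-- The curvature of a module over a local ring: the exponential growth rate of its Betti
numbers. -/
noncomputable def curvature (A : Type) [CommRing A] [IsLocalRing A] (M : Type) [AddCommGroup M]
    [Module A M] : ℝ≥0∞ :=
  growthRate fun n => bettiNumber A M n

theorem curvature_le_max_curvature (Q R M : Type) [CommRing Q] [IsLocalRing Q]
    [IsNoetherianRing Q] [CommRing R] [IsLocalRing R] [Algebra Q R] [Module.Finite Q R]
    [AddCommGroup M] [Module Q M] [Module R M] [IsScalarTower Q R M] [Module.Finite R M] :
    curvature Q M ≤ max (curvature Q R) (curvature R M) :=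
  growthRate_le_max_of_le_sum_antidiagonal (fun _ => ENNReal.natCast_ne_top _)
    (fun _ => ENNReal.natCast_ne_top _)
    fun n => by exact_mod_cast bettiNumber_le_sum_antidiagonal Q R M n

lemma IsExactPair.curvature_quotient_le_one {Q : Type} [CommRing Q] [IsLocalRing Q]
    [IsNoetherianRing Q] {f g : Q} (h : IsExactPair f g) :
    curvature Q (Q ⧸ Ideal.span {f}) ≤ 1 :=
  growthRate_le_of_le_mul_pow ENNReal.one_ne_top fun n => by
    simpa using h.bettiNumber_quotient_le_one n

end Curvature

/-- **Curvature bound.** Let `f, g` be an exact pair of zerodivisors in the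
maximal ideal of a Noetherian local ring `Q` and set `R = Q/(f)`. Then for every
finitely generated `R`-module `M`,
`curv_Q(M) = limsup (β_i^Q(M))^{1/i} ≤ max{curv_R(M), 1}`. -/
theorem curvature_le_of_exact_zerodivisor
    (Q : Type) [CommRing Q] [IsNoetherianRing Q] [IsLocalRing Q]
    (f g : Q) (hf0 : f ≠ 0) (hg0 : g ≠ 0)
    (hfm : f ∈ IsLocalRing.maximalIdeal Q) (hgm : g ∈ IsLocalRing.maximalIdeal Q)
    (hannf : ∀ x : Q, x * f = 0 ↔ x ∈ Ideal.span {g})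
    (hanng : ∀ x : Q, x * g = 0 ↔ x ∈ Ideal.span {f})
    [IsLocalRing (Q ⧸ Ideal.span {f})]
    (M : Type) [AddCommGroup M] [Module Q M] [Module (Q ⧸ Ideal.span {f}) M]
    [IsScalarTower Q (Q ⧸ Ideal.span {f}) M]
    [Module.Finite (Q ⧸ Ideal.span {f}) M] :
    Filter.limsup (fun i : ℕ => (bettiNumber Q M i : ENNReal) ^ (1 / (i : ℝ)))
        Filter.atTop ≤
      max (Filter.limsup
        (fun i : ℕ => (bettiNumber (Q ⧸ Ideal.span {f}) M i : ENNReal) ^ (1 / (i : ℝ)))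
        Filter.atTop) 1 := by
  calc curvature Q M
      ≤ max (curvature Q (Q ⧸ Ideal.span {f})) (curvature (Q ⧸ Ideal.span {f}) M) :=
        curvature_le_max_curvature Q _ M
    _ ≤ max (curvature (Q ⧸ Ideal.span {f}) M) 1 := by
        rw [max_comm]
        exact max_le_max le_rfl (IsExactPair.mk hannf hanng).curvature_quotient_le_one
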